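/- arXiv:1002.3338 — 2 statements merged into one kernel-verified Lean document; each statement's English description precedes it below -/
import Mathlib

section
/- Let D ⊆ ℝℙⁿ be a compact convex set and let (U_k) be a sequence of open convex sets with U_{k+1} ⊆ U_k for all k and ⋂_k U_k = D. Then D^e = ⋂_k U_k^e. -/
open scoped ComplexConjugate

noncomputable section

abbrev RV (n : ℕ) : Type := Fin (n + 1) → ℝ
abbrev CV (n : ℕ) : Type := Fin (n + 1) → ℂ
abbrev RP (n : ℕ) : Type := Projectivization ℝ (RV n)
abbrev CP (n : ℕ) : Type := Projectivization ℂ (CV n)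

/-- The quotient topology on a projectivization. -/
instance projTopology {K V : Type*} [DivisionRing K] [AddCommGroup V] [Module K V]
    [TopologicalSpace V] : TopologicalSpace (Projectivization K V) :=
  inferInstanceAs (TopologicalSpace (Quotient (projectivizationSetoid K V)))

/-- Complexification of a real vector. -/
def cplx {n : ℕ} (v : RV n) : CV n := fun i => (v i : ℂ)

/-- The closed (possibly degenerate) projective segment spanned by two lifts. -/
def realSeg {n : ℕ} (v₀ v₁ : RV n) : Set (RP n) :=
  {x | ∃ c₀ c₁ : ℝ, 0 ≤ c₀ * c₁ ∧ ∃ h : c₀ • v₀ + c₁ • v₁ ≠ 0,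
    x = Projectivization.mk ℝ (c₀ • v₀ + c₁ • v₁) h}

/-- The elliptic tube over the closed segment determined by the lifts `v₀ v₁`. -/
def segTube {n : ℕ} (v₀ v₁ : RV n) : Set (CP n) :=
  {z | ∃ c₀ c₁ : ℂ, 0 ≤ (c₀ * conj c₁).re ∧ ∃ h : c₀ • cplx v₀ + c₁ • cplx v₁ ≠ 0,
    z = Projectivization.mk ℂ (c₀ • cplx v₀ + c₁ • cplx v₁) h}

/-- The elliptic tube over a subset `D` of real projective space: the union of the tubes
over all closed segments contained in `D`. -/
def eTube {n : ℕ} (D : Set (RP n)) : Set (CP n) :=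
  ⋃ (v₀ : RV n) (v₁ : RV n) (_ : v₀ ≠ 0) (_ : v₁ ≠ 0) (_ : realSeg v₀ v₁ ⊆ D),
    segTube v₀ v₁

/-- Real projective lines. -/
def isLineR {n : ℕ} (L : Set (RP n)) : Prop :=
  ∃ W : Submodule ℝ (RV n), Module.finrank ℝ W = 2 ∧ L = {x | x.rep ∈ W}

/-- Convexity in real projective space: the set contains no projective line and its
intersection with every projective line is connected. -/
def convexR {n : ℕ} (D : Set (RP n)) : Prop :=
  (∀ L, isLineR L → ¬ L ⊆ D) ∧ ∀ L, isLineR L → IsPreconnected (D ∩ L)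

/-! A point `[w]` belongs to `Dᵉ` as soon as some lift `w = x + iy` has the segment from `[x]` to
`[y]` contained in `D`. Conversely, if `w = c₀ u + c₁ v` with `Re (c₀ c̄₁) ≥ 0`, then `c₀` and
`c₁` are at angle at most `π / 2`, so a rotation of `w` moves both into the closed first quadrant,
and the segment from `[x]` to `[y]` becomes part of the segment from `[u]` to `[v]`.
Hence `[w] ∈ Uᵉ` means that some `c` on the unit circle rotates `w` to such a lift, and compactness
of the circle provides a `c` that serves all `U i` at once. As the `U i` need not be closed, the
compactness argument is run with open segments, for which the admissible `c` form a closed set;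
closedness of `⋂ i, U i` gives back the endpoints. -/

section ProjectiveTopology

variable {K V : Type*} [AddCommGroup V] [TopologicalSpace V]

lemma isOpenQuotientMap_projectivization_mk' [DivisionRing K] [Module K V]
    [ContinuousConstSMul K V] :
    IsOpenQuotientMap (Projectivization.mk' K : {v : V // v ≠ 0} → Projectivization K V) := by
  refine ⟨Quotient.mk''_surjective, continuous_quotient_mk', fun O hO => ?_⟩
  have hsaturation : Projectivization.mk' K ⁻¹' (Projectivization.mk' K '' O) =
      ⋃ c : Kˣ, (fun v : {v : V // v ≠ 0} =>
        (⟨c • v.1, (smul_ne_zero_iff_ne c).mpr v.2⟩ : {v : V // v ≠ 0})) ⁻¹' O := by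
    ext v
    simp only [Set.mem_preimage, Set.mem_image, Set.mem_iUnion, Projectivization.mk'_eq_mk,
      Projectivization.mk_eq_mk_iff]
    constructor
    · rintro ⟨u, hu, c, hc⟩
      exact ⟨c, by simpa only [hc] using hu⟩
    · rintro ⟨c, hc⟩
      exact ⟨_, hc, c, rfl⟩
  have hopen : IsOpen (Projectivization.mk' K ⁻¹' (Projectivization.mk' K '' O)) := by
    rw [hsaturation]
    exact isOpen_iUnion fun c => hO.preimage <|
      (continuous_subtype_val.const_smul c).subtype_mk _
  exact isOpen_coinduced.mpr hopen

variable [Field K] [Module K V]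

lemma projectivization_mk_eq_mk_iff_forall_dual [TopologicalSpace K] [SeparatingDual K V]
    {v w : V} (hv : v ≠ 0) (hw : w ≠ 0) :
    Projectivization.mk K v hv = Projectivization.mk K w hw ↔
      ∀ f : StrongDual K V, f v • w = f w • v := by
  rw [Projectivization.mk_eq_mk_iff']
  constructor
  · rintro ⟨c, rfl⟩ f
    rw [map_smul, smul_comm, smul_assoc]
  · intro h
    obtain ⟨f, hf⟩ := SeparatingDual.exists_ne_zero (R := K) hw
    exact ⟨(f w)⁻¹ * f v, by rw [mul_smul, h f, inv_smul_smul₀ hf]⟩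

instance projT2Space [TopologicalSpace K] [ContinuousSMul K V] [T2Space V]
    [SeparatingDual K V] : T2Space (Projectivization K V) := by
  rw [t2Space_iff_of_isOpenQuotientMap isOpenQuotientMap_projectivization_mk']
  simp only [Projectivization.mk'_eq_mk, projectivization_mk_eq_mk_iff_forall_dual,
    Set.ofPred_forall]
  exact isClosed_iInter fun f => isClosed_eq (by fun_prop) (by fun_prop)

end ProjectiveTopology

section Cone

variable {n : ℕ} {D : Set (RP n)}

/-- The cone in `ℝⁿ⁺¹` over a subset of `ℝℙⁿ`, including the apex `0`. -/
def coneOver (D : Set (RP n)) : Set (RV n) :=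
  {v | ∀ h : v ≠ 0, Projectivization.mk ℝ v h ∈ D}

lemma coneOver_mono : Monotone (coneOver (n := n)) :=
  fun _ _ h _ hv hv0 => h (hv hv0)

lemma coneOver_iInter {ι : Sort*} (U : ι → Set (RP n)) :
    coneOver (⋂ i, U i) = ⋂ i, coneOver (U i) := by
  ext v
  simp only [coneOver, Set.mem_iInter, Set.mem_ofPred_eq]
  exact forall_comm

lemma isClosed_coneOver (hD : IsClosed D) : IsClosed (coneOver D) := by
  have hcompl : (coneOver D)ᶜ = Subtype.val '' (Projectivization.mk' ℝ ⁻¹' Dᶜ) := by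
    ext v
    simp [coneOver]
  rw [← isOpen_compl_iff, hcompl]
  exact isOpen_ne.isOpenMap_subtype_val _ <|
    hD.isOpen_compl.preimage isOpenQuotientMap_projectivization_mk'.continuous

lemma realSeg_subset_iff {u v : RV n} :
    realSeg u v ⊆ D ↔ ∀ a b : ℝ, 0 ≤ a * b → a • u + b • v ∈ coneOver D := by
  constructor
  · exact fun h a b hab hne => h ⟨a, b, hab, hne, rfl⟩
  · rintro h _ ⟨a, b, hab, hne, rfl⟩
    exact h a b hab hne

end Cone

section RealPart

variable {n : ℕ}

/-- The coordinatewise real part of a complex vector. -/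
def reVec (w : CV n) : RV n := fun i => (w i).re

/-- The coordinatewise imaginary part of a complex vector. -/
def imVec (w : CV n) : RV n := fun i => (w i).im

lemma cplx_zero : cplx (0 : RV n) = 0 := by
  simp [cplx, funext_iff]

lemma cplx_reVec_add_I_smul_cplx_imVec (w : CV n) :
    cplx (reVec w) + Complex.I • cplx (imVec w) = w := by
  ext i
  simp [cplx, reVec, imVec, mul_comm Complex.I, Complex.re_add_im]

lemma reVec_smul_cplx_add (a b : ℂ) (u v : RV n) :
    reVec (a • cplx u + b • cplx v) = a.re • u + b.re • v := by
  ext i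
  simp [cplx, reVec]

lemma reVec_conj_smul (a : ℂ) (w : CV n) :
    reVec (conj a • w) = a.re • reVec w + a.im • imVec w := by
  ext i
  simp [reVec, imVec]

@[fun_prop]
lemma continuous_reVec : Continuous (reVec (n := n)) := by
  unfold reVec
  fun_prop

lemma realSeg_reVec_imVec_subset_iff {D : Set (RP n)} {w : CV n} :
    realSeg (reVec w) (imVec w) ⊆ D ↔
      ∀ a : ℂ, 0 ≤ a.re * a.im → reVec (conj a • w) ∈ coneOver D := by
  simp only [realSeg_subset_iff, reVec_conj_smul]
  exact ⟨fun h a => h a.re a.im, fun h a b => h ⟨a, b⟩⟩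

end RealPart

section Quadrant

lemma exists_circle_mul_eq_norm (a : ℂ) : ∃ c : Circle, c * a = ‖a‖ := by
  refine ⟨(Circle.exp a.arg)⁻¹, ?_⟩
  rw [Circle.coe_inv, Circle.coe_exp, inv_mul_eq_iff_eq_mul₀ (Complex.exp_ne_zero _), mul_comm]
  exact (Complex.norm_mul_exp_arg_mul_I a).symm

lemma exists_circle_mul_mem_quadrant {a b : ℂ} (h : 0 ≤ (a * conj b).re) :
    ∃ c : Circle, (0 ≤ (c * a).re ∧ 0 ≤ (c * a).im) ∧ 0 ≤ (c * b).re ∧ 0 ≤ (c * b).im := by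
  wlog him : 0 ≤ (conj a * b).im generalizing a b
  · have hre : (b * conj a).re = (a * conj b).re := by simp [mul_comm]
    have him_neg : (conj b * a).im = -(conj a * b).im := by
      simp only [Complex.mul_im, Complex.conj_re, Complex.conj_im]
      ring
    obtain ⟨c, hb, ha⟩ := this (hre ▸ h) (by linarith)
    exact ⟨c, ha, hb⟩
  rcases eq_or_ne a 0 with rfl | ha
  · obtain ⟨c, hc⟩ := exists_circle_mul_eq_norm b
    exact ⟨c, by simp, by simp [hc]⟩
  obtain ⟨c, hc⟩ := exists_circle_mul_eq_norm a
  have hcb : conj a * b = (‖a‖ : ℂ) * (c * b) := by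
    calc conj a * b = (conj (c : ℂ) * c) * (conj a * b) := by
          rw [Complex.conj_mul', Circle.norm_coe, Complex.ofReal_one, one_pow, one_mul]
      _ = conj (c * a) * (c * b) := by rw [map_mul]; ring
      _ = ‖a‖ * (c * b) := by rw [hc, Complex.conj_ofReal]
  have hpos : 0 < ‖a‖ := norm_pos_iff.mpr ha
  have hre : 0 ≤ (conj a * b).re := by simpa using h
  rw [hcb, Complex.re_ofReal_mul] at hre
  rw [hcb, Complex.im_ofReal_mul] at him
  exact ⟨c, by simp [hc], nonneg_of_mul_nonneg_right hre hpos,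
    nonneg_of_mul_nonneg_right him hpos⟩

lemma re_conj_mul_mul_re_conj_mul_nonneg {a b₀ b₁ : ℂ} (ha : 0 ≤ a.re * a.im)
    (h₀ : 0 ≤ b₀.re ∧ 0 ≤ b₀.im) (h₁ : 0 ≤ b₁.re ∧ 0 ≤ b₁.im) :
    0 ≤ (conj a * b₀).re * (conj a * b₁).re := by
  obtain ⟨hre₀, him₀⟩ := h₀
  obtain ⟨hre₁, him₁⟩ := h₁
  simp only [Complex.mul_re, Complex.conj_re, Complex.conj_im, neg_mul, sub_neg_eq_add]
  rcases mul_nonneg_iff.mp ha with ⟨hre, him⟩ | ⟨hre, him⟩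
  · positivity
  · exact mul_nonneg_of_nonpos_of_nonpos
      (add_nonpos (mul_nonpos_of_nonpos_of_nonneg hre hre₀)
        (mul_nonpos_of_nonpos_of_nonneg him him₀))
      (add_nonpos (mul_nonpos_of_nonpos_of_nonneg hre hre₁)
        (mul_nonpos_of_nonpos_of_nonneg him him₁))

lemma closure_re_mul_im_pos :
    closure {a : ℂ | 0 < a.re * a.im} = {a | 0 ≤ a.re * a.im} := by
  have hpos : {a : ℂ | 0 < a.re * a.im} =
      Set.Ioi 0 ×ℂ Set.Ioi 0 ∪ Set.Iio 0 ×ℂ Set.Iio 0 := by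
    ext a
    simp [Complex.mem_reProdIm, mul_pos_iff]
  rw [hpos, closure_union, Complex.closure_reProdIm, Complex.closure_reProdIm, closure_Ioi,
    closure_Iio]
  ext a
  simp [Complex.mem_reProdIm, mul_nonneg_iff]

end Quadrant

section EllipticTube

variable {n : ℕ} {D : Set (RP n)} {w : CV n}

lemma mk_mem_segTube_iff {u v : RV n} (hw : w ≠ 0) :
    Projectivization.mk ℂ w hw ∈ segTube u v ↔
      ∃ c₀ c₁ : ℂ, 0 ≤ (c₀ * conj c₁).re ∧ w = c₀ • cplx u + c₁ • cplx v := by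
  constructor
  · rintro ⟨c₀, c₁, hc, hne, hz⟩
    obtain ⟨l, hl⟩ := (Projectivization.mk_eq_mk_iff' ..).mp hz
    refine ⟨l * c₀, l * c₁, ?_, by rw [← hl, smul_add, mul_smul, mul_smul]⟩
    have hscale : l * c₀ * conj (l * c₁) = (Complex.normSq l : ℂ) * (c₀ * conj c₁) := by
      rw [Complex.normSq_eq_conj_mul_self, map_mul]
      ring
    rw [hscale, Complex.re_ofReal_mul]
    exact mul_nonneg (Complex.normSq_nonneg l) hc
  · rintro ⟨c₀, c₁, hc, rfl⟩
    exact ⟨c₀, c₁, hc, hw, rfl⟩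

lemma mem_eTube_iff {z : CP n} :
    z ∈ eTube D ↔ ∃ u v : RV n, u ≠ 0 ∧ v ≠ 0 ∧ realSeg u v ⊆ D ∧ z ∈ segTube u v := by
  simp only [eTube, Set.mem_iUnion, exists_prop]

lemma eTube_mono : Monotone (eTube (n := n)) := by
  intro D E h z hz
  obtain ⟨u, v, hu, hv, hs, hz⟩ := mem_eTube_iff.mp hz
  exact mem_eTube_iff.mpr ⟨u, v, hu, hv, hs.trans h, hz⟩

lemma mk_mem_eTube_of_realSeg_subset (hw : w ≠ 0)
    (hD : realSeg (reVec w) (imVec w) ⊆ D) : Projectivization.mk ℂ w hw ∈ eTube D := by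
  have hsplit := cplx_reVec_add_I_smul_cplx_imVec w
  rw [realSeg_subset_iff] at hD
  rw [mem_eTube_iff]
  simp only [mk_mem_segTube_iff, realSeg_subset_iff]
  by_cases hx : reVec w = 0
  · have hy : imVec w ≠ 0 := by
      intro hy
      exact hw (by rw [← hsplit, hx, hy, cplx_zero, smul_zero, add_zero])
    refine ⟨imVec w, imVec w, hy, hy, fun a b _ => ?_, 0, Complex.I, by simp, ?_⟩
    · simpa [add_smul] using hD 0 (a + b) (by simp)
    · simpa [hx, cplx_zero] using hsplit.symm
  by_cases hy : imVec w = 0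
  · refine ⟨reVec w, reVec w, hx, hx, fun a b _ => ?_, 1, 0, by simp, ?_⟩
    · simpa [add_smul] using hD (a + b) 0 (by simp)
    · simpa [hy, cplx_zero] using hsplit.symm
  exact ⟨reVec w, imVec w, hx, hy, hD, 1, Complex.I, by simp, by rw [one_smul, hsplit]⟩

lemma mk_mem_eTube_iff_exists_circle (hw : w ≠ 0) :
    Projectivization.mk ℂ w hw ∈ eTube D ↔
      ∃ c : Circle, realSeg (reVec (c • w)) (imVec (c • w)) ⊆ D := by
  constructor
  · intro hz
    obtain ⟨u, v, -, -, hD, hz⟩ := mem_eTube_iff.mp hz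
    obtain ⟨c₀, c₁, hc, rfl⟩ := (mk_mem_segTube_iff hw).mp hz
    obtain ⟨c, h₀, h₁⟩ := exists_circle_mul_mem_quadrant hc
    refine ⟨c, realSeg_reVec_imVec_subset_iff.mpr fun a ha => ?_⟩
    rw [Circle.smul_def, smul_add, smul_smul, smul_smul, smul_add, smul_smul, smul_smul,
      reVec_smul_cplx_add]
    exact realSeg_subset_iff.mp hD _ _ (re_conj_mul_mul_re_conj_mul_nonneg ha h₀ h₁)
  · rintro ⟨c, hc⟩
    have hcw : c • w ≠ 0 := by
      rw [Circle.smul_def]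
      exact smul_ne_zero c.coe_ne_zero hw
    have hmk : Projectivization.mk ℂ w hw = Projectivization.mk ℂ (c • w) hcw :=
      (Projectivization.mk_eq_mk_iff' ..).mpr ⟨(c⁻¹ : Circle), inv_smul_smul c w⟩
    rw [hmk]
    exact mk_mem_eTube_of_realSeg_subset hcw hc

end EllipticTube

section Rotations

variable {n : ℕ} {D : Set (RP n)} {w : CV n}

/-- The rotations `c` for which the open segment between the real and the imaginary part of `c w`
lies in `U`. With `a = s + it`, the vector `Re (ā c w)` is `s Re (c w) + t Im (c w)`. -/
def openSegRotations (w : CV n) (U : Set (RP n)) : Set Circle :=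
  {c | ∀ a : ℂ, 0 < a.re * a.im → reVec (conj a • c • w) ∈ coneOver U}

lemma openSegRotations_mono (w : CV n) : Monotone (openSegRotations w) :=
  fun _ _ h _ hc a ha => coneOver_mono h (hc a ha)

lemma openSegRotations_iInter {ι : Sort*} (w : CV n) (U : ι → Set (RP n)) :
    openSegRotations w (⋂ i, U i) = ⋂ i, openSegRotations w (U i) := by
  ext c
  simp only [openSegRotations, coneOver_iInter, Set.mem_iInter, Set.mem_ofPred_eq]
  exact ⟨fun h i a ha => h a ha i, fun h a ha i => h i a ha⟩

-- Absorbing `c` into `a` makes the vector independent of `c`; each condition is then closed in `c`.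
lemma mem_openSegRotations_iff {U : Set (RP n)} {c : Circle} :
    c ∈ openSegRotations w U ↔
      ∀ a : ℂ, 0 < (a * c).re * (a * c).im → reVec (conj a • w) ∈ coneOver U := by
  have hrotate (a : ℂ) : conj (a * c) • c • w = conj a • w := by
    rw [Circle.smul_def, smul_smul, map_mul, mul_assoc, Complex.conj_mul', Circle.norm_coe]
    simp
  constructor
  · intro h a ha
    exact hrotate a ▸ h (a * c) ha
  · intro h a ha
    have hcancel : a * (c⁻¹ : Circle) * c = a := by simp
    rw [← hcancel, hrotate]
    exact h _ (by rwa [hcancel])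

lemma isClosed_openSegRotations (w : CV n) (U : Set (RP n)) :
    IsClosed (openSegRotations w U) := by
  have hInter : openSegRotations w U =
      ⋂ (a : ℂ) (_ : reVec (conj a • w) ∉ coneOver U),
        {c : Circle | (a * c).re * (a * c).im ≤ 0} := by
    ext c
    simp only [mem_openSegRotations_iff, Set.mem_iInter, Set.mem_ofPred_eq]
    exact forall_congr' fun a => by rw [← not_imp_not, not_lt]
  rw [hInter]
  refine isClosed_biInter fun a _ => isClosed_le ?_ continuous_const
  fun_prop

lemma mem_openSegRotations_iff_realSeg_subset (hD : IsClosed D) {c : Circle} :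
    c ∈ openSegRotations w D ↔ realSeg (reVec (c • w)) (imVec (c • w)) ⊆ D := by
  have hclosed : IsClosed {a : ℂ | reVec (conj a • c • w) ∈ coneOver D} :=
    (isClosed_coneOver hD).preimage (by fun_prop)
  rw [realSeg_reVec_imVec_subset_iff]
  have hclosure := hclosed.closure_subset_iff (s := {a : ℂ | 0 < a.re * a.im})
  rw [closure_re_mul_im_pos] at hclosure
  exact hclosure.symm

end Rotations

theorem eTube_iInter_general {n : ℕ} {ι : Type*} [Nonempty ι] {U : ι → Set (RP n)}
    (hU : Directed (· ⊇ ·) U) (hclosed : IsClosed (⋂ i, U i)) :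
    eTube (⋂ i, U i) = ⋂ i, eTube (U i) := by
  refine (Set.subset_iInter fun i => eTube_mono (Set.iInter_subset U i)).antisymm
    fun z hz => ?_
  induction z using Projectivization.ind with | h w hw => ?_
  have hne (i : ι) : (openSegRotations w (U i)).Nonempty := by
    obtain ⟨c, hc⟩ := (mk_mem_eTube_iff_exists_circle hw).mp (Set.mem_iInter.mp hz i)
    exact ⟨c, fun a ha => realSeg_reVec_imVec_subset_iff.mp hc a ha.le⟩
  have hdir : Directed (· ⊇ ·) fun i => openSegRotations w (U i) :=
    hU.mono_comp _ (g := openSegRotations w) fun _ _ h => openSegRotations_mono w h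
  have hcl (i : ι) := isClosed_openSegRotations w (U i)
  obtain ⟨c, hc⟩ := IsCompact.nonempty_iInter_of_directed_nonempty_isCompact_isClosed _
    hdir hne (fun i => (hcl i).isCompact) hcl
  rw [← openSegRotations_iInter, mem_openSegRotations_iff_realSeg_subset hclosed] at hc
  exact (mk_mem_eTube_iff_exists_circle hw).mpr ⟨c, hc⟩

/-- If `D ⊆ ℝℙⁿ` is compact convex and `(U_k)` is a decreasing sequence of
open convex sets with `⋂ U_k = D`, then `D^e = ⋂ U_k^e`. -/
theorem eTube_iInter
    (n : ℕ) (D : Set (RP n)) (hDc : IsCompact D) (hDconv : convexR D)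
    (U : ℕ → Set (RP n)) (hUo : ∀ k, IsOpen (U k)) (hUc : ∀ k, convexR (U k))
    (hUmono : ∀ k, U (k + 1) ⊆ U k) (hUinter : ⋂ k, U k = D) :
    eTube D = ⋂ k, eTube (U k) := by
  subst hUinter
  exact eTube_iInter_general (antitone_nat_of_succ_le hUmono).directed_ge hDc.isClosed
end
end

section
/- Let D ⊆ ℝℙⁿ be a properly convex set which is either open or compact. Then the dual complement of the elliptic tube of D equals the elliptic tube of the dual complement of D: (D^e)* = (D*)^e, where (D*)^e ⊆ (ℂℙⁿ)* is the elliptic tube of D* ⊆ (ℝℙⁿ)* formed in the dual projective spaces. -/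
open scoped ComplexConjugate

noncomputable section

/-- Projective hyperplanes in real projective space. -/
def isHypR {n : ℕ} (H : Set (RP n)) : Prop :=
  ∃ ξ : Module.Dual ℝ (RV n), ξ ≠ 0 ∧ H = {x | ξ x.rep = 0}

/-- Proper convexity in real projective space. -/
def properlyConvexR {n : ℕ} (D : Set (RP n)) : Prop :=
  convexR D ∧ (∀ H, isHypR H → ¬ D ⊆ H) ∧
    ∀ L, isLineR L → ∀ p ∈ L, ¬ (L \ {p}) ⊆ D

/-- The dual real projective space `(ℝℙⁿ)* = ℙ((ℝ^{n+1})*)`. -/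
abbrev RPd (n : ℕ) : Type := Projectivization ℝ (Module.Dual ℝ (RV n))

/-- The dual complex projective space `(ℂℙⁿ)* = ℙ((ℂ^{n+1})*)`. -/
abbrev CPd (n : ℕ) : Type := Projectivization ℂ (Module.Dual ℂ (CV n))

/-- The complex-linear extension of a real linear functional on `ℝ^{n+1}`. -/
def extLD {n : ℕ} (f : Module.Dual ℝ (RV n)) : Module.Dual ℂ (CV n) :=
  ∑ i, (f (Pi.single i 1) : ℂ) • (LinearMap.proj i : CV n →ₗ[ℂ] ℂ)

/-- The dual complement `D* ⊆ (ℝℙⁿ)*` of a set `D ⊆ ℝℙⁿ`. -/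
def dualCompR {n : ℕ} (D : Set (RP n)) : Set (RPd n) :=
  {ξ | ∀ x ∈ D, ξ.rep x.rep ≠ 0}

/-- The dual complement `E* ⊆ (ℂℙⁿ)*` of a set `E ⊆ ℂℙⁿ`. -/
def dualCompC {n : ℕ} (E : Set (CP n)) : Set (CPd n) :=
  {ξ | ∀ z ∈ E, ξ.rep z.rep ≠ 0}

/-- Closed (possibly degenerate) segments in the dual real projective space. -/
def realSegD {n : ℕ} (f₀ f₁ : Module.Dual ℝ (RV n)) : Set (RPd n) :=
  {x | ∃ c₀ c₁ : ℝ, 0 ≤ c₀ * c₁ ∧ ∃ h : c₀ • f₀ + c₁ • f₁ ≠ 0,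
    x = Projectivization.mk ℝ (c₀ • f₀ + c₁ • f₁) h}

/-- The elliptic tube over the segment of the dual projective space given by lifts `f₀ f₁`. -/
def segTubeD {n : ℕ} (f₀ f₁ : Module.Dual ℝ (RV n)) : Set (CPd n) :=
  {z | ∃ c₀ c₁ : ℂ, 0 ≤ (c₀ * conj c₁).re ∧ ∃ h : c₀ • extLD f₀ + c₁ • extLD f₁ ≠ 0,
    z = Projectivization.mk ℂ (c₀ • extLD f₀ + c₁ • extLD f₁) h}

/-- The elliptic tube over a subset of the dual real projective space. -/
def eTubeD {n : ℕ} (F : Set (RPd n)) : Set (CPd n) :=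
  ⋃ (f₀ : Module.Dual ℝ (RV n)) (f₁ : Module.Dual ℝ (RV n)) (_ : f₀ ≠ 0) (_ : f₁ ≠ 0)
    (_ : realSegD f₀ f₁ ⊆ F), segTubeD f₀ f₁

/-!
On a segment of `D` the values of a functional `ζ = X + i Y` without zeros on the tube pairwise
enclose acute angles. After `ζ` has been rotated to be real at one point of `D`, any two slopes
`s, t` of `Y / X` on `D` therefore satisfy `1 + s t > 0`, because connectedness of the line
sections joins two points of `D` by a segment. Since `D` is open or compact, the slopes lie in an
open interval `(N, M)` with `1 + N M ≥ 0`. The functionals `Y - N X` and `M X - Y` then span a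
segment of `D*` whose tube contains `ζ`. Conversely, on a segment of `D` a functional in the tube
of a segment of `D*` takes values at the two extremes that enclose an acute angle, so it cannot
vanish on the tube of the segment.
-/

section AffineCone

variable {K V : Type*} [Field K] [AddCommGroup V] [Module K V]

/-- The cone over a subset of a projective space: all lifts of its points, without the origin. -/
def affineCone (D : Set (Projectivization K V)) : Set V :=
  {v | ∃ h : v ≠ 0, Projectivization.mk K v h ∈ D}

/-- The dual complement in homogeneous form: the nonzero functionals without zeros on `C`. -/
def dualCompl (C : Set V) : Set (Module.Dual K V) :=
  {f | f ≠ 0 ∧ ∀ v ∈ C, f v ≠ 0}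

lemma affineCone_injective :
    Function.Injective (affineCone : Set (Projectivization K V) → Set V) := by
  intro D E h
  ext x
  induction x using Projectivization.ind with
  | h v hv => simpa [affineCone, hv] using Set.ext_iff.1 h v

lemma zero_notMem_affineCone (D : Set (Projectivization K V)) : 0 ∉ affineCone D :=
  fun h => h.1 rfl

lemma smul_mem_affineCone {D : Set (Projectivization K V)} {v : V} {c : K} (hc : c ≠ 0)
    (hv : v ∈ affineCone D) : c • v ∈ affineCone D := by
  obtain ⟨h, hvD⟩ := hv
  refine ⟨smul_ne_zero hc h, ?_⟩
  rwa [(Projectivization.mk_eq_mk_iff' K _ _ _ h).2 ⟨c, rfl⟩]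

lemma rep_mem_affineCone {D : Set (Projectivization K V)} {x : Projectivization K V}
    (hx : x ∈ D) : x.rep ∈ affineCone D :=
  ⟨x.rep_nonzero, by rwa [Projectivization.mk_rep]⟩

lemma rep_mk_mem_iff (W : Submodule K V) {v : V} (hv : v ≠ 0) :
    (Projectivization.mk K v hv).rep ∈ W ↔ v ∈ W := by
  obtain ⟨a, ha⟩ := Projectivization.exists_smul_eq_mk_rep K v hv
  rw [← ha, Units.smul_def, W.smul_mem_iff a.ne_zero]

lemma apply_ne_zero_of_mem_span_pair {D : Set (Projectivization K V)}
    {f : Module.Dual K V} {v w x : V} {r : K} (hw : f w ≠ 0) (hf : f (v + r • w) = 0)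
    (hr : v + r • w ∉ affineCone D) (hx : x ∈ affineCone D)
    (hx_span : x ∈ Submodule.span K {v, w}) : f x ≠ 0 := by
  obtain ⟨a, b, rfl⟩ := Submodule.mem_span_pair.1 hx_span
  intro hzero
  simp only [map_add, map_smul, smul_eq_mul] at hf hzero
  obtain rfl : b = a * r := by
    refine mul_right_cancel₀ hw ?_
    linear_combination hzero - a * hf
  have ha : a ≠ 0 := by
    rintro rfl
    simp [zero_notMem_affineCone] at hx
  refine hr ?_
  convert smul_mem_affineCone (inv_ne_zero ha) hx using 1
  match_scalars <;> field_simp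

lemma rep_mk_apply_rep_mk_ne_zero_iff {f : Module.Dual K V} (hf : f ≠ 0) {v : V} (hv : v ≠ 0) :
    (Projectivization.mk K f hf).rep (Projectivization.mk K v hv).rep ≠ 0 ↔ f v ≠ 0 := by
  obtain ⟨a, ha⟩ := Projectivization.exists_smul_eq_mk_rep K f hf
  obtain ⟨b, hb⟩ := Projectivization.exists_smul_eq_mk_rep K v hv
  simp [← ha, ← hb, Units.smul_def]

lemma affineCone_setOf_forall_rep_apply_rep_ne_zero (D : Set (Projectivization K V)) :
    affineCone {ξ : Projectivization K (Module.Dual K V) | ∀ x ∈ D, ξ.rep x.rep ≠ 0} =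
      dualCompl (affineCone D) := by
  ext f
  constructor
  · rintro ⟨hf, h⟩
    exact ⟨hf, fun v ⟨hv, hvD⟩ => (rep_mk_apply_rep_mk_ne_zero_iff hf hv).1 (h _ hvD)⟩
  · rintro ⟨hf, h⟩
    refine ⟨hf, fun x hx => ?_⟩
    rw [← x.mk_rep, rep_mk_apply_rep_mk_ne_zero_iff hf x.rep_nonzero]
    exact h _ (rep_mem_affineCone hx)

lemma dualCompl_affineCone_empty :
    dualCompl (affineCone (∅ : Set (Projectivization K V))) =
      affineCone (Set.univ : Set (Projectivization K (Module.Dual K V))) := by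
  ext f
  simp [dualCompl, affineCone]

lemma mem_dualCompl_iff_of_nonempty {C : Set V} (hC : C.Nonempty) {f : Module.Dual K V} :
    f ∈ dualCompl C ↔ ∀ v ∈ C, f v ≠ 0 := by
  refine ⟨And.right, fun h => ⟨?_, h⟩⟩
  rintro rfl
  exact h _ hC.some_mem rfl

lemma smul_mem_dualCompl {C : Set V} {f : Module.Dual K V} {c : K} (hc : c ≠ 0)
    (hf : f ∈ dualCompl C) : c • f ∈ dualCompl C :=
  ⟨smul_ne_zero hc hf.1, fun v hv => mul_ne_zero hc (hf.2 v hv)⟩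

end AffineCone

section Ratio

variable {K V : Type*} [Field K] [AddCommGroup V] [Module K V]

/-- The quotient `Y / X` of two linear functionals as a function on projective space. It takes the
junk value `0` on the hyperplane `X = 0`. -/
def ratio (Y X : Module.Dual K V) (x : Projectivization K V) : K :=
  Y x.rep / X x.rep

lemma ratio_mk (Y X : Module.Dual K V) {v : V} (hv : v ≠ 0) :
    ratio Y X (Projectivization.mk K v hv) = Y v / X v := by
  obtain ⟨a, ha⟩ := Projectivization.exists_smul_eq_mk_rep K v hv
  simp [ratio, ← ha, Units.smul_def, mul_div_mul_left]

variable [TopologicalSpace V]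

lemma isQuotientMap_projectivization_mk' :
    Topology.IsQuotientMap (Projectivization.mk' K : {v : V // v ≠ 0} → Projectivization K V) :=
  isQuotientMap_quot_mk

lemma isOpen_affineCone [T1Space V] {D : Set (Projectivization K V)} (hD : IsOpen D) :
    IsOpen (affineCone D) := by
  have hpre : IsOpen (Projectivization.mk' K ⁻¹' D) :=
    isQuotientMap_projectivization_mk'.isOpen_preimage.2 hD
  convert isOpen_ne.isOpenMap_subtype_val _ hpre using 1
  ext v
  simp [affineCone, Projectivization.mk'_eq_mk]

variable [TopologicalSpace K]

lemma continuousOn_ratio [IsTopologicalDivisionRing K] [T1Space K] {Y X : Module.Dual K V}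
    (hY : Continuous Y) (hX : Continuous X) : ContinuousOn (ratio Y X) {x | X x.rep ≠ 0} := by
  have hpre : Projectivization.mk' K ⁻¹' {x | X x.rep ≠ 0} = {v : {v : V // v ≠ 0} | X v ≠ 0} := by
    ext ⟨v, hv⟩
    obtain ⟨a, ha⟩ := Projectivization.exists_smul_eq_mk_rep K v hv
    simp [Projectivization.mk'_eq_mk, ← ha, Units.smul_def]
  have hopen : IsOpen {x : Projectivization K V | X x.rep ≠ 0} := by
    rw [← isQuotientMap_projectivization_mk'.isOpen_preimage, hpre]
    exact isOpen_ne.preimage (hX.comp continuous_subtype_val)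
  have hcomp : ratio Y X ∘ Projectivization.mk' K = fun v : {v : V // v ≠ 0} => Y v / X v :=
    funext fun v => ratio_mk Y X v.2
  rw [isQuotientMap_projectivization_mk'.continuousOn_isOpen_iff hopen, hpre, hcomp]
  exact (hY.comp continuous_subtype_val).continuousOn.div₀
    (hX.comp continuous_subtype_val).continuousOn fun _ hv => hv

/- Moving `v` along a direction in which `X` is constant but `Y` is not changes `Y / X` freely. -/
lemma isOpen_image_ratio [ContinuousMul K] [ContinuousSub K] [ContinuousAdd V] [ContinuousSMul K V]
    [T1Space V] {D : Set (Projectivization K V)} (hD : IsOpen D) {Y X : Module.Dual K V}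
    (hX : ∀ v ∈ affineCone D, X v ≠ 0) {e : V} (hXe : X e = 0) (hYe : Y e ≠ 0) :
    IsOpen (ratio Y X '' D) := by
  let shift (v : V) (s : K) : V := v + ((s - Y v / X v) * (X v / Y e)) • e
  have hX_shift (v : V) (s : K) : X (shift v s) = X v := by simp [shift, hXe]
  have hY_shift (v : V) (s : K) (hv : X v ≠ 0) : Y (shift v s) / X (shift v s) = s := by
    rw [hX_shift]
    simp only [shift, map_add, map_smul, smul_eq_mul]
    field_simp
    ring
  have himage : ratio Y X '' D = ⋃ v ∈ affineCone D, shift v ⁻¹' affineCone D := by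
    ext s
    simp only [Set.mem_image, Set.mem_iUnion, Set.mem_preimage, exists_prop]
    constructor
    · rintro ⟨x, hx, rfl⟩
      refine ⟨x.rep, rep_mem_affineCone hx, ?_⟩
      simpa [shift, ratio] using rep_mem_affineCone hx
    · rintro ⟨v, hv, h0, hmem⟩
      exact ⟨_, hmem, (ratio_mk Y X h0).trans (hY_shift v s (hX v hv))⟩
  rw [himage]
  refine isOpen_biUnion fun v _ => (isOpen_affineCone hD).preimage ?_
  fun_prop

lemma isOpen_or_isCompact_image_ratio [IsTopologicalDivisionRing K] [T1Space K] [ContinuousAdd V]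
    [ContinuousSMul K V] [T1Space V] {D : Set (Projectivization K V)}
    (hD : IsOpen D ∨ IsCompact D) {Y X : Module.Dual K V} (hYc : Continuous Y)
    (hXc : Continuous X) (hX : ∀ v ∈ affineCone D, X v ≠ 0) {p : V} (hp : p ∈ affineCone D)
    (hYp : Y p = 0) : IsOpen (ratio Y X '' D) ∨ IsCompact (ratio Y X '' D) := by
  rcases hD with hD | hD
  · by_cases hY : ∃ u, Y u ≠ 0
    · obtain ⟨u, hu⟩ := hY
      refine .inl (isOpen_image_ratio hD hX (e := u - (X u / X p) • p) ?_ ?_)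
      · simp [hX p hp]
      · simpa [hYp] using hu
    · push Not at hY
      have hzero : ratio Y X '' D ⊆ {0} := by
        rintro _ ⟨x, -, rfl⟩
        simp [ratio, hY]
      exact .inr ((Set.finite_singleton 0).subset hzero).isCompact
  · exact .inr (hD.image_of_continuousOn
      ((continuousOn_ratio hYc hXc).mono fun x hx => hX _ (rep_mem_affineCone hx)))

end Ratio

section SlopeBounds

lemma exists_subset_Ioo_of_isOpen_of_one_add_mul_pos {S : Set ℝ} (hS : IsOpen S) (h0 : 0 ∈ S)
    (hpos : ∀ s ∈ S, ∀ t ∈ S, 0 < 1 + s * t) :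
    ∃ N M : ℝ, S ⊆ Set.Ioo N M ∧ 0 ≤ 1 + N * M := by
  obtain ⟨ε, hε, hball⟩ := Metric.isOpen_iff.1 hS 0 h0
  have hε_mem : ε / 2 ∈ S := hball (by simp [abs_of_pos hε, hε])
  have hneg_mem : -(ε / 2) ∈ S := hball (by simp [abs_of_pos hε, hε])
  have habove : BddAbove S :=
    ⟨1 / (ε / 2), fun s hs => by
      rw [le_div_iff₀ (half_pos hε)]
      linarith [hpos s hs _ hneg_mem]⟩
  have hbelow : BddBelow S :=
    ⟨-1 / (ε / 2), fun s hs => by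
      rw [div_le_iff₀ (half_pos hε)]
      linarith [hpos s hs _ hε_mem]⟩
  refine ⟨sInf S, sSup S, ?_, ?_⟩
  · rw [← interior_Icc]
    exact interior_maximal (subset_Icc_csInf_csSup hbelow habove) hS
  · have hmem := map_mem_closure₂ (f := fun s t : ℝ => 1 + s * t) (u := Set.Ioi 0) (by fun_prop)
      (csInf_mem_closure ⟨0, h0⟩ hbelow) (csSup_mem_closure ⟨0, h0⟩ habove) hpos
    rwa [closure_Ioi] at hmem

lemma exists_subset_Ioo_of_isCompact_of_one_add_mul_pos {S : Set ℝ} (hS : IsCompact S)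
    (hne : S.Nonempty) (hpos : ∀ s ∈ S, ∀ t ∈ S, 0 < 1 + s * t) :
    ∃ N M : ℝ, S ⊆ Set.Ioo N M ∧ 0 ≤ 1 + N * M := by
  have hlim : ∀ᶠ ε in nhdsWithin (0 : ℝ) (Set.Ioi 0), 0 < 1 + (sInf S - ε) * (sSup S + ε) := by
    have hcont : Continuous fun ε : ℝ => 1 + (sInf S - ε) * (sSup S + ε) := by fun_prop
    refine nhdsWithin_le_nhds (hcont.continuousAt.eventually (lt_mem_nhds ?_))
    simpa using hpos _ (hS.sInf_mem hne) _ (hS.sSup_mem hne)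
  obtain ⟨ε, hε_bound, hε⟩ := (hlim.and self_mem_nhdsWithin).exists
  refine ⟨sInf S - ε, sSup S + ε, fun s hs => ⟨?_, ?_⟩, hε_bound.le⟩
  · exact (sub_lt_self _ hε).trans_le (csInf_le hS.bddBelow hs)
  · exact (le_csSup hS.bddAbove hs).trans_lt (lt_add_of_pos_right _ hε)

end SlopeBounds

section ConeSegment

variable {V : Type*} [AddCommGroup V] [Module ℝ V]

/-- The lifts `v₀`, `v₁` span a closed segment of the set with cone `C`. Unlike for `realSeg`,
no admissible combination of the two lifts may vanish, so `v₁` is not a nonpositive multiple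
of `v₀`. -/
def IsConeSegment (C : Set V) (v₀ v₁ : V) : Prop :=
  ∀ c₀ c₁ : ℝ, 0 ≤ c₀ * c₁ → (c₀ ≠ 0 ∨ c₁ ≠ 0) → c₀ • v₀ + c₁ • v₁ ∈ C

namespace IsConeSegment

variable {C : Set V} {v₀ v₁ : V}

lemma left_mem (h : IsConeSegment C v₀ v₁) : v₀ ∈ C := by
  simpa using h 1 0 (by simp) (by simp)

lemma right_mem (h : IsConeSegment C v₀ v₁) : v₁ ∈ C := by
  simpa using h 0 1 (by simp) (by simp)

lemma mul_pos (h : IsConeSegment C v₀ v₁) {f : Module.Dual ℝ V} (hf : ∀ v ∈ C, f v ≠ 0) :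
    0 < f v₀ * f v₁ := by
  by_contra! hle
  refine hf _ (h (f v₁) (-f v₀) (by linarith) (.inl (hf v₁ h.right_mem))) ?_
  simp [mul_comm]

end IsConeSegment

lemma isConeSegment_self {D : Set (Projectivization ℝ V)} {v : V} (hv : v ∈ affineCone D) :
    IsConeSegment (affineCone D) v v := by
  intro c₀ c₁ hc hne
  rw [← add_smul]
  refine smul_mem_affineCone (fun h => ?_) hv
  obtain rfl : c₁ = -c₀ := by linarith
  have : c₀ = 0 := by nlinarith
  simp [this] at hne

lemma isConeSegment_affineCone_of_forall_pos {D : Set (Projectivization ℝ V)} {v₀ v₁ : V}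
    (h₀ : v₀ ∈ affineCone D) (h₁ : v₁ ∈ affineCone D)
    (h : ∀ t : ℝ, 0 < t → v₀ + t • v₁ ∈ affineCone D) : IsConeSegment (affineCone D) v₀ v₁ := by
  intro c₀ c₁ hc hne
  by_cases hc₀ : c₀ = 0
  · have hc₁ : c₁ ≠ 0 := by simpa [hc₀] using hne
    simpa [hc₀] using smul_mem_affineCone hc₁ h₁
  by_cases hc₁ : c₁ = 0
  · simpa [hc₁] using smul_mem_affineCone hc₀ h₀
  have hquot : 0 < c₁ / c₀ := by
    rw [← mul_div_mul_left c₁ c₀ hc₀]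
    exact div_pos (hc.lt_of_ne' (mul_ne_zero hc₀ hc₁)) (mul_self_pos.2 hc₀)
  simpa [smul_add, smul_smul, mul_div_cancel₀ _ hc₀] using smul_mem_affineCone hc₀ (h _ hquot)

lemma isConeSegment_dualCompl {C : Set V} (hC : C.Nonempty) {f₀ f₁ : Module.Dual ℝ V}
    (h : ∀ v ∈ C, 0 < f₀ v * f₁ v) : IsConeSegment (dualCompl C) f₀ f₁ := by
  intro c₀ c₁ hc hne
  refine (mem_dualCompl_iff_of_nonempty hC).2 fun v hv hzero => ?_
  have hsum : c₀ * f₀ v + c₁ * f₁ v = 0 := by simpa using hzero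
  have hpos := h v hv
  have hsq : (c₁ * f₁ v) ^ 2 = 0 := by
    have : (c₁ * f₁ v) ^ 2 = -(c₀ * c₁ * (f₀ v * f₁ v)) := by
      linear_combination (c₁ * f₁ v) * hsum
    nlinarith [mul_nonneg hc hpos.le, sq_nonneg (c₁ * f₁ v)]
  have hc₁ : c₁ = 0 := by simpa [right_ne_zero_of_mul hpos.ne'] using hsq
  have hc₀ : c₀ = 0 := by simpa [hc₁, left_ne_zero_of_mul hpos.ne'] using hsum
  simp [hc₀, hc₁] at hne

end ConeSegment

section EllipticTube

variable {V U : Type*} [AddCommGroup V] [Module ℝ V] [AddCommGroup U] [Module ℂ U]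

/-- The common form of `eTube` and `eTubeD`: the elliptic tube over a subset of the real projective
space of `V`, formed in the complex projective space of `U`, where `j : V → U` plays the role of
the complexification. -/
def ellipticTube (j : V →ₛₗ[Complex.ofRealHom] U) (D : Set (Projectivization ℝ V)) :
    Set (Projectivization ℂ U) :=
  ⋃ (v₀ : V) (v₁ : V) (_ : v₀ ≠ 0) (_ : v₁ ≠ 0)
    (_ : {x | ∃ c₀ c₁ : ℝ, 0 ≤ c₀ * c₁ ∧ ∃ h : c₀ • v₀ + c₁ • v₁ ≠ 0,
      x = Projectivization.mk ℝ (c₀ • v₀ + c₁ • v₁) h} ⊆ D),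
    {z | ∃ c₀ c₁ : ℂ, 0 ≤ (c₀ * conj c₁).re ∧ ∃ h : c₀ • j v₀ + c₁ • j v₁ ≠ 0,
      z = Projectivization.mk ℂ (c₀ • j v₀ + c₁ • j v₁) h}

/-- The elliptic tube in homogeneous form: the cone over the elliptic tube of the set with
cone `C`. -/
def coneTube (j : V →ₛₗ[Complex.ofRealHom] U) (C : Set V) : Set U :=
  {u | u ≠ 0 ∧ ∃ v₀ v₁, IsConeSegment C v₀ v₁ ∧
    ∃ c₀ c₁ : ℂ, 0 ≤ (c₀ * conj c₁).re ∧ u = c₀ • j v₀ + c₁ • j v₁}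

variable {j : V →ₛₗ[Complex.ofRealHom] U} {C : Set V}

lemma smul_mem_coneTube_iff {a : ℂ} (ha : a ≠ 0) {u : U} :
    a • u ∈ coneTube j C ↔ u ∈ coneTube j C := by
  have smul_mem : ∀ {b : ℂ} {w : U}, b ≠ 0 → w ∈ coneTube j C → b • w ∈ coneTube j C := by
    rintro b _ hb ⟨hw, v₀, v₁, hseg, c₀, c₁, hc, rfl⟩
    refine ⟨smul_ne_zero hb hw, v₀, v₁, hseg, b * c₀, b * c₁, ?_, by module⟩
    have : b * c₀ * conj (b * c₁) = Complex.normSq b * (c₀ * conj c₁) := by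
      rw [map_mul, ← Complex.mul_conj]
      ring
    rw [this, Complex.re_ofReal_mul]
    exact mul_nonneg (Complex.normSq_nonneg b) hc
  exact ⟨fun h => by simpa [ha] using smul_mem (inv_ne_zero ha) h, smul_mem ha⟩

/- If an admissible combination of `v₀` and `v₁` vanishes, both are multiples of a lift of a single
point. -/
lemma add_smul_mem_coneTube {D : Set (Projectivization ℝ V)} {v₀ v₁ : V}
    (hseg : ∀ c₀ c₁ : ℝ, 0 ≤ c₀ * c₁ → c₀ • v₀ + c₁ • v₁ ≠ 0 → c₀ • v₀ + c₁ • v₁ ∈ affineCone D)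
    {d₀ d₁ : ℂ} (hd : 0 ≤ (d₀ * conj d₁).re) (hne : d₀ • j v₀ + d₁ • j v₁ ≠ 0) :
    d₀ • j v₀ + d₁ • j v₁ ∈ coneTube j (affineCone D) := by
  by_cases h : IsConeSegment (affineCone D) v₀ v₁
  · exact ⟨hne, v₀, v₁, h, d₀, d₁, hd, rfl⟩
  rcases eq_or_ne v₀ 0 with rfl | hv₀
  · have hv₁ : v₁ ∈ affineCone D := by
      have hv₁ : v₁ ≠ 0 := by
        rintro rfl
        simp at hne
      simpa [hv₁] using hseg 0 1 (by simp)
    exact ⟨hne, v₁, v₁, isConeSegment_self hv₁, d₁, 0, by simp, by simp⟩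
  obtain ⟨k, rfl⟩ : ∃ k : ℝ, v₁ = k • v₀ := by
    simp only [IsConeSegment, not_forall] at h
    obtain ⟨c₀, c₁, hc, hc_ne, hmem⟩ := h
    have hzero : c₀ • v₀ + c₁ • v₁ = 0 := by_contra fun h => hmem (hseg c₀ c₁ hc h)
    have hc₁ : c₁ ≠ 0 := by
      rintro rfl
      simp_all
    refine ⟨-(c₁⁻¹ * c₀), ?_⟩
    rw [neg_smul, mul_smul, eq_neg_of_add_eq_zero_left hzero, smul_neg, inv_smul_smul₀ hc₁, neg_neg]
  have hv₀_mem : v₀ ∈ affineCone D := by simpa [hv₀] using hseg 1 0 (by simp)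
  refine ⟨hne, v₀, v₀, isConeSegment_self hv₀_mem, d₀ + d₁ * k, 0, by simp, ?_⟩
  rw [map_smulₛₗ, Complex.ofRealHom_eq_coe]
  module

lemma affineCone_ellipticTube (D : Set (Projectivization ℝ V)) :
    affineCone (ellipticTube j D) = coneTube j (affineCone D) := by
  ext u
  constructor
  · rintro ⟨hu, hmem⟩
    simp only [ellipticTube, Set.mem_iUnion] at hmem
    obtain ⟨v₀, v₁, -, -, hseg, d₀, d₁, hd, hne, heq⟩ := hmem
    obtain ⟨a, rfl⟩ := (Projectivization.mk_eq_mk_iff' ℂ _ _ hu hne).1 heq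
    rw [smul_mem_coneTube_iff (smul_ne_zero_iff.1 hu).1]
    exact add_smul_mem_coneTube (fun c₀ c₁ hc h => ⟨h, hseg ⟨c₀, c₁, hc, h, rfl⟩⟩) hd hne
  · rintro ⟨hu, v₀, v₁, hseg, c₀, c₁, hc, rfl⟩
    refine ⟨hu, ?_⟩
    simp only [ellipticTube, Set.mem_iUnion]
    refine ⟨v₀, v₁, hseg.left_mem.1, hseg.right_mem.1, ?_, c₀, c₁, hc, hu, rfl⟩
    rintro _ ⟨b₀, b₁, hb, hne, rfl⟩
    have hb_ne : b₀ ≠ 0 ∨ b₁ ≠ 0 := by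
      by_contra! h
      simp [h] at hne
    exact (hseg b₀ b₁ hb hb_ne).2

end EllipticTube

section Duality

lemma re_mul_conj_pos_of_mul_pos {c₀ c₁ : ℂ} (hc : 0 ≤ (c₀ * conj c₁).re)
    (hne : c₀ ≠ 0 ∨ c₁ ≠ 0) {a b a' b' : ℝ} (haa : 0 < a * a') (hbb : 0 < b * b')
    (hab : 0 < a * b) : 0 < ((c₀ * a + c₁ * b) * conj (c₀ * a' + c₁ * b')).re := by
  have hexpand : ((c₀ * a + c₁ * b) * conj (c₀ * a' + c₁ * b')).re =
      Complex.normSq c₀ * (a * a') + Complex.normSq c₁ * (b * b') +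
        (c₀ * conj c₁).re * (a * b' + a' * b) := by
    simp [Complex.normSq_apply]
    ring
  have hab' : 0 < a * b' :=
    pos_of_mul_pos_left (b := b ^ 2) (by linarith [mul_pos hab hbb]) (sq_nonneg b)
  have ha'b : 0 < a' * b :=
    pos_of_mul_pos_left (b := a ^ 2) (by linarith [mul_pos hab haa]) (sq_nonneg a)
  have hcross := mul_nonneg hc (add_pos hab' ha'b).le
  have hnorm₀ := mul_nonneg (Complex.normSq_nonneg c₀) haa.le
  have hnorm₁ := mul_nonneg (Complex.normSq_nonneg c₁) hbb.le
  rw [hexpand]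
  rcases hne with h | h
  · linarith [mul_pos (Complex.normSq_pos.2 h) haa]
  · linarith [mul_pos (Complex.normSq_pos.2 h) hbb]

lemma mul_add_mul_ne_zero_of_re_pos {d₀ d₁ a₀ a₁ : ℂ} (hd : 0 ≤ (d₀ * conj d₁).re)
    (hne : d₀ ≠ 0 ∨ d₁ ≠ 0) (ha : 0 < (a₀ * conj a₁).re) : d₀ * a₀ + d₁ * a₁ ≠ 0 := by
  intro h
  have ha₀ : a₀ ≠ 0 := by
    rintro rfl
    simp at ha
  have hd₁ : d₁ ≠ 0 := by
    rintro rfl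
    simp_all
  have hprod : (d₀ * conj d₁) * Complex.normSq a₀ =
      -(Complex.normSq d₁ * conj (a₀ * conj a₁)) := by
    simp only [map_mul, Complex.conj_conj, ← Complex.mul_conj]
    linear_combination (conj d₁ * conj a₀) * h
  have hre := congrArg Complex.re hprod
  rw [Complex.re_mul_ofReal, Complex.neg_re, Complex.re_ofReal_mul, Complex.conj_re] at hre
  have hleft := mul_nonneg hd (Complex.normSq_nonneg a₀)
  have hright := mul_pos (Complex.normSq_pos.2 hd₁) ha
  linarith

lemma coneTube_dualCompl_subset {V U : Type*} [AddCommGroup V] [Module ℝ V] [AddCommGroup U]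
    [Module ℂ U] {j : V →ₛₗ[Complex.ofRealHom] U}
    {j' : Module.Dual ℝ V →ₛₗ[Complex.ofRealHom] Module.Dual ℂ U}
    (hpair : ∀ f v, j' f (j v) = f v) (C : Set V) :
    coneTube j' (dualCompl C) ⊆ dualCompl (coneTube j C) := by
  rintro _ ⟨hξ, f₀, f₁, hf, c₀, c₁, hc, rfl⟩
  refine ⟨hξ, ?_⟩
  rintro _ ⟨hz, v₀, v₁, hv, d₀, d₁, hd, rfl⟩
  have hc_ne : c₀ ≠ 0 ∨ c₁ ≠ 0 := by
    by_contra! h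
    simp [h] at hξ
  have hd_ne : d₀ ≠ 0 ∨ d₁ ≠ 0 := by
    by_contra! h
    simp [h] at hz
  have hf₀₁ : 0 < f₀ v₀ * f₁ v₀ :=
    hf.mul_pos (f := Module.Dual.eval ℝ V v₀) fun _ hg => hg.2 v₀ hv.left_mem
  have hacute := re_mul_conj_pos_of_mul_pos hc hc_ne (hv.mul_pos hf.left_mem.2)
    (hv.mul_pos hf.right_mem.2) hf₀₁
  convert mul_add_mul_ne_zero_of_re_pos hd hd_ne hacute using 1
  simp only [map_add, map_smul, LinearMap.add_apply, LinearMap.smul_apply, smul_eq_mul, hpair]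

end Duality

section PreconnectedLineSections

lemma exists_dual_forall_apply_eq {ι K V : Type*} [Field K] [AddCommGroup V] [Module K V]
    {b : ι → V} (hb : LinearIndependent K b) (c : ι → K) :
    ∃ f : Module.Dual K V, ∀ i, f (b i) = c i := by
  obtain ⟨g, hg⟩ :=
    (Finsupp.linearCombination K b).exists_leftInverse_of_injective (LinearMap.ker_eq_bot.2 hb)
  refine ⟨Finsupp.linearCombination K c ∘ₗ g, fun i => ?_⟩
  have hgi : g (b i) = Finsupp.single i 1 := by
    simpa using LinearMap.congr_fun hg (Finsupp.single i 1)
  simp [hgi]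

variable {n : ℕ} {D : Set (RP n)}

lemma isLineR_setOf_rep_mem_span_pair {v w : RV n} (h : LinearIndependent ℝ ![v, w]) :
    isLineR {x : RP n | x.rep ∈ Submodule.span ℝ {v, w}} := by
  refine ⟨_, ?_, rfl⟩
  rw [← Matrix.range_cons_cons_empty v w ![]]
  simp [finrank_span_eq_card h]

/- Otherwise the quotient of a functional vanishing at `v - s • w` by one vanishing at `v + t • w`
is continuous and without zeros on the section of `D` by the line through `v` and `w`, but takes
values of opposite signs at `v` and `w`. -/
lemma add_smul_mem_or_sub_smul_mem_affineCone (hconn : ∀ L, isLineR L → IsPreconnected (D ∩ L))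
    {v w : RV n} (hv : v ∈ affineCone D) (hw : w ∈ affineCone D)
    (hli : LinearIndependent ℝ ![v, w]) {s t : ℝ} (hs : 0 < s) (ht : 0 < t) :
    v + t • w ∈ affineCone D ∨ v - s • w ∈ affineCone D := by
  by_contra! hcon
  obtain ⟨hplus, hminus⟩ := hcon
  obtain ⟨α, hα⟩ := exists_dual_forall_apply_eq hli ![s, 1]
  obtain ⟨β, hβ⟩ := exists_dual_forall_apply_eq hli ![t, -1]
  simp only [Fin.forall_fin_two, Matrix.cons_val_zero, Matrix.cons_val_one] at hα hβ
  set W := Submodule.span ℝ {v, w}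
  have hne : ∀ x ∈ D ∩ {x | x.rep ∈ W}, α x.rep ≠ 0 ∧ β x.rep ≠ 0 := by
    rintro x ⟨hxD, hxW⟩
    have hminus' : v + (-s) • w ∉ affineCone D := by rwa [neg_smul, ← sub_eq_add_neg]
    exact ⟨apply_ne_zero_of_mem_span_pair (by simp [hα]) (by simp [hα]) hminus'
        (rep_mem_affineCone hxD) hxW,
      apply_ne_zero_of_mem_span_pair (by simp [hβ]) (by simp [hβ]) hplus
        (rep_mem_affineCone hxD) hxW⟩
  have hcont : ContinuousOn (ratio α β) (D ∩ {x | x.rep ∈ W}) :=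
    (continuousOn_ratio α.continuous_of_finiteDimensional β.continuous_of_finiteDimensional).mono
      fun x hx => (hne x hx).2
  obtain ⟨x, hx, hx_zero⟩ : (0 : ℝ) ∈ ratio α β '' (D ∩ {x | x.rep ∈ W}) := by
    refine (hconn _ (isLineR_setOf_rep_mem_span_pair hli)).intermediate_value
      (a := Projectivization.mk ℝ w hw.1) (b := Projectivization.mk ℝ v hv.1)
      ⟨hw.2, (rep_mk_mem_iff W hw.1).2 (Submodule.subset_span (by simp))⟩
      ⟨hv.2, (rep_mk_mem_iff W hv.1).2 (Submodule.subset_span (by simp))⟩ hcont ⟨?_, ?_⟩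
    · norm_num [ratio_mk, hα, hβ]
    · rw [ratio_mk, hα.1, hβ.1]
      positivity
  exact div_ne_zero (hne x hx).1 (hne x hx).2 hx_zero

lemma isConeSegment_or_isConeSegment_neg (hconn : ∀ L, isLineR L → IsPreconnected (D ∩ L))
    {v w : RV n} (hv : v ∈ affineCone D) (hw : w ∈ affineCone D) :
    IsConeSegment (affineCone D) v w ∨ IsConeSegment (affineCone D) v (-w) := by
  by_contra! hcon
  have hw_neg : -w ∈ affineCone D := by
    simpa using smul_mem_affineCone (neg_ne_zero.2 (one_ne_zero' ℝ)) hw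
  obtain ⟨t, ht, hplus⟩ : ∃ t : ℝ, 0 < t ∧ v + t • w ∉ affineCone D := by
    simpa using mt (isConeSegment_affineCone_of_forall_pos hv hw) hcon.1
  obtain ⟨s, hs, hminus⟩ : ∃ s : ℝ, 0 < s ∧ v - s • w ∉ affineCone D := by
    simpa [sub_eq_add_neg] using mt (isConeSegment_affineCone_of_forall_pos hv hw_neg) hcon.2
  have hli : LinearIndependent ℝ ![v, w] := by
    refine (LinearIndependent.pair_iff' hv.1).2 fun k hk => ?_
    subst hk
    have hzero : ∀ c : ℝ, c • v ∉ affineCone D → c = 0 := fun c hc =>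
      by_contra fun h => hc (smul_mem_affineCone h hv)
    have hplus_zero := hzero (1 + t * k) (by rwa [add_smul, one_smul, mul_smul])
    have hminus_zero := hzero (1 - s * k) (by rwa [sub_smul, one_smul, mul_smul])
    nlinarith
  exact (add_smul_mem_or_sub_smul_mem_affineCone hconn hv hw hli hs ht).elim hplus hminus

end PreconnectedLineSections

section Complexification

variable {n : ℕ}

/-- `cplx` as a semilinear map. -/
def cplxₛₗ : RV n →ₛₗ[Complex.ofRealHom] CV n where
  toFun := cplx
  map_add' v w := by
    ext i
    simp [cplx]
  map_smul' k v := by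
    ext i
    simp [cplx]

lemma cplxₛₗ_ne_zero {v : RV n} (hv : v ≠ 0) : cplxₛₗ v ≠ 0 := by
  contrapose! hv
  ext i
  exact Complex.ofReal_eq_zero.1 (congrFun hv i)

/-- `extLD` as a semilinear map. -/
def extLDₛₗ : Module.Dual ℝ (RV n) →ₛₗ[Complex.ofRealHom] Module.Dual ℂ (CV n) where
  toFun := extLD
  map_add' f g := by simp [extLD, add_smul, Finset.sum_add_distrib]
  map_smul' k f := by simp [extLD, mul_smul, Finset.smul_sum]

lemma extLDₛₗ_apply_cplxₛₗ (f : Module.Dual ℝ (RV n)) (v : RV n) :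
    extLDₛₗ f (cplxₛₗ v) = f v := by
  conv_rhs => rw [pi_eq_sum_univ' v]
  simp [extLDₛₗ, cplxₛₗ, extLD, cplx, mul_comm, Pi.single]

/-- The real part of a complex functional, restricted to real vectors. -/
def rePart (ζ : Module.Dual ℂ (CV n)) : Module.Dual ℝ (RV n) where
  toFun v := (ζ (cplxₛₗ v)).re
  map_add' v w := by simp
  map_smul' k v := by simp

/-- The imaginary part of a complex functional, restricted to real vectors. -/
def imPart (ζ : Module.Dual ℂ (CV n)) : Module.Dual ℝ (RV n) where
  toFun v := (ζ (cplxₛₗ v)).im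
  map_add' v w := by simp
  map_smul' k v := by simp

lemma extLDₛₗ_rePart_add_imPart (ζ : Module.Dual ℂ (CV n)) :
    extLDₛₗ (rePart ζ) + Complex.I • extLDₛₗ (imPart ζ) = ζ := by
  refine LinearMap.pi_ext' fun i => LinearMap.ext_ring ?_
  have hsingle : (Pi.single i 1 : CV n) = cplxₛₗ (Pi.single i 1) := by
    ext k
    by_cases hk : k = i <;> simp [cplxₛₗ, cplx, hk]
  simp only [LinearMap.comp_apply, LinearMap.single_apply, hsingle, LinearMap.add_apply,
    LinearMap.smul_apply, extLDₛₗ_apply_cplxₛₗ, smul_eq_mul]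
  rw [mul_comm]
  exact Complex.re_add_im _

end Complexification

section Separation

variable {n : ℕ} {D : Set (RP n)} {ζ : Module.Dual ℂ (CV n)}

lemma re_apply_mul_conj_apply (v w : RV n) : (ζ (cplxₛₗ v) * conj (ζ (cplxₛₗ w))).re =
    rePart ζ v * rePart ζ w + imPart ζ v * imPart ζ w := by
  simp [rePart, imPart]

lemma IsConeSegment.smul_add_smul_ne_zero {C : Set (RV n)} {v w : RV n} (h : IsConeSegment C v w)
    (h0 : 0 ∉ C) {c₀ c₁ : ℂ} (hc : 0 ≤ (c₀ * conj c₁).re) (hc₀ : c₀ ≠ 0) :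
    c₀ • cplxₛₗ v + c₁ • cplxₛₗ w ≠ 0 := by
  intro hz
  have hreal : Complex.normSq c₀ • v + (c₀ * conj c₁).re • w = 0 := by
    ext i
    have hzi : c₀ * v i + c₁ * w i = 0 := congrFun hz i
    have hconj : Complex.normSq c₀ * (v i : ℂ) + conj (c₀ * conj c₁) * w i = 0 := by
      rw [← Complex.mul_conj, map_mul, Complex.conj_conj]
      linear_combination conj c₀ * hzi
    simpa using congrArg Complex.re hconj
  exact h0 (hreal ▸ h _ _ (mul_nonneg (Complex.normSq_nonneg c₀) hc)
    (.inl (Complex.normSq_eq_zero.not.2 hc₀)))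

/- If the angle were not acute, the combination `ζ w • v - ζ v • w`, on which `ζ` vanishes, would
lie in the tube. -/
lemma IsConeSegment.rePart_mul_add_imPart_mul_pos {C : Set (RV n)} {v w : RV n}
    (h : IsConeSegment C v w) (h0 : 0 ∉ C) (hζ : ζ ∈ dualCompl (coneTube cplxₛₗ C)) :
    0 < rePart ζ v * rePart ζ w + imPart ζ v * imPart ζ w := by
  rw [← re_apply_mul_conj_apply]
  by_contra! hle
  set a := ζ (cplxₛₗ v)
  set b := ζ (cplxₛₗ w)
  have hw : cplxₛₗ w ≠ 0 := cplxₛₗ_ne_zero (ne_of_mem_of_not_mem h.right_mem h0)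
  have hb : b ≠ 0 := hζ.2 _ ⟨hw, v, w, h, 0, 1, by simp, by simp⟩
  have hab : 0 ≤ (b * conj (-a)).re := by
    have hre : (b * conj (-a)).re = -(a * conj b).re := by
      simp only [map_neg, mul_neg, Complex.neg_re, Complex.mul_re, Complex.conj_re, Complex.conj_im]
      ring
    exact hre ▸ neg_nonneg.2 hle
  refine hζ.2 _ ⟨h.smul_add_smul_ne_zero h0 hab hb, v, w, h, b, -a, hab, rfl⟩ ?_
  simp [a, b, mul_comm]

lemma rePart_ne_zero_of_imPart_eq_zero (hconn : ∀ L, isLineR L → IsPreconnected (D ∩ L))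
    (hζ : ζ ∈ dualCompl (coneTube cplxₛₗ (affineCone D))) {p : RV n} (hp : p ∈ affineCone D)
    (hp_im : imPart ζ p = 0) {v : RV n} (hv : v ∈ affineCone D) : rePart ζ v ≠ 0 := by
  intro hre
  rcases isConeSegment_or_isConeSegment_neg hconn hv hp with h | h
  · simpa [hre, hp_im] using h.rePart_mul_add_imPart_mul_pos (zero_notMem_affineCone D) hζ
  · simpa [hre, hp_im] using h.rePart_mul_add_imPart_mul_pos (zero_notMem_affineCone D) hζ

lemma one_add_ratio_mul_ratio_pos (hconn : ∀ L, isLineR L → IsPreconnected (D ∩ L))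
    (hζ : ζ ∈ dualCompl (coneTube cplxₛₗ (affineCone D)))
    (hre : ∀ v ∈ affineCone D, rePart ζ v ≠ 0) {x y : RP n} (hx : x ∈ D) (hy : y ∈ D) :
    0 < 1 + ratio (imPart ζ) (rePart ζ) x * ratio (imPart ζ) (rePart ζ) y := by
  have of_segment : ∀ v w, IsConeSegment (affineCone D) v w →
      0 < 1 + imPart ζ v / rePart ζ v * (imPart ζ w / rePart ζ w) := by
    intro v w h
    have hre_pos := h.mul_pos hre
    rw [div_mul_div_comm, one_add_div hre_pos.ne']
    exact div_pos (h.rePart_mul_add_imPart_mul_pos (zero_notMem_affineCone D) hζ) hre_pos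
  rcases isConeSegment_or_isConeSegment_neg hconn (rep_mem_affineCone hx)
    (rep_mem_affineCone hy) with h | h
  · exact of_segment _ _ h
  · simpa only [ratio, map_neg, neg_div_neg_eq] using of_segment _ _ h

/- With `f₀ = Y - N X` and `f₁ = M X - Y` for `ζ = X + i Y`, the combination
`(1 + i M) f₀ + (1 + i N) f₁` equals `(M - N) ζ`. -/
lemma mem_coneTube_of_image_ratio_subset_Ioo (hD : D.Nonempty) (hζ : ζ ≠ 0)
    (hre : ∀ v ∈ affineCone D, rePart ζ v ≠ 0) {N M : ℝ}
    (hsub : ratio (imPart ζ) (rePart ζ) '' D ⊆ Set.Ioo N M) (hNM : 0 ≤ 1 + N * M) :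
    ζ ∈ coneTube extLDₛₗ (dualCompl (affineCone D)) := by
  obtain ⟨x₀, hx₀⟩ := hD
  have hlt : N < M := (hsub ⟨x₀, hx₀, rfl⟩).1.trans (hsub ⟨x₀, hx₀, rfl⟩).2
  have hMN : (M - N : ℂ) ≠ 0 := by exact_mod_cast (sub_pos.2 hlt).ne'
  have hseg : IsConeSegment (dualCompl (affineCone D)) (imPart ζ - N • rePart ζ)
      (M • rePart ζ - imPart ζ) := by
    refine isConeSegment_dualCompl ⟨_, rep_mem_affineCone hx₀⟩ fun v hv => ?_
    have hmem : imPart ζ v / rePart ζ v ∈ Set.Ioo N M := by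
      rw [← ratio_mk _ _ hv.1]
      exact hsub ⟨_, hv.2, rfl⟩
    have hfactor : (imPart ζ - N • rePart ζ) v * (M • rePart ζ - imPart ζ) v =
        rePart ζ v ^ 2 *
          ((imPart ζ v / rePart ζ v - N) * (M - imPart ζ v / rePart ζ v)) := by
      simp only [LinearMap.sub_apply, LinearMap.smul_apply, smul_eq_mul]
      field_simp [hre v hv]
    rw [hfactor]
    exact mul_pos (pow_two_pos_of_ne_zero (hre v hv))
      (mul_pos (sub_pos.2 hmem.1) (sub_pos.2 hmem.2))
  rw [← smul_mem_coneTube_iff hMN]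
  refine ⟨smul_ne_zero hMN hζ, _, _, hseg, 1 + Complex.I * M, 1 + Complex.I * N, ?_, ?_⟩
  · simpa [mul_comm] using hNM
  · conv_lhs => rw [← extLDₛₗ_rePart_add_imPart ζ]
    simp only [map_sub, map_smulₛₗ, Complex.ofRealHom_eq_coe]
    module

lemma mem_coneTube_of_imPart_eq_zero (hD : IsOpen D ∨ IsCompact D)
    (hconn : ∀ L, isLineR L → IsPreconnected (D ∩ L))
    (hζ : ζ ∈ dualCompl (coneTube cplxₛₗ (affineCone D))) {p : RV n} (hp : p ∈ affineCone D)
    (hp_im : imPart ζ p = 0) : ζ ∈ coneTube extLDₛₗ (dualCompl (affineCone D)) := by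
  have hre : ∀ v ∈ affineCone D, rePart ζ v ≠ 0 := fun v =>
    rePart_ne_zero_of_imPart_eq_zero hconn hζ hp hp_im
  have hD_ne : D.Nonempty := ⟨_, hp.2⟩
  have hpos : ∀ s ∈ ratio (imPart ζ) (rePart ζ) '' D, ∀ t ∈ ratio (imPart ζ) (rePart ζ) '' D,
      0 < 1 + s * t := by
    rintro _ ⟨x, hx, rfl⟩ _ ⟨y, hy, rfl⟩
    exact one_add_ratio_mul_ratio_pos hconn hζ hre hx hy
  have hzero : 0 ∈ ratio (imPart ζ) (rePart ζ) '' D :=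
    ⟨_, hp.2, by rw [ratio_mk, hp_im, zero_div]⟩
  obtain ⟨N, M, hsub, hNM⟩ : ∃ N M : ℝ,
      ratio (imPart ζ) (rePart ζ) '' D ⊆ Set.Ioo N M ∧ 0 ≤ 1 + N * M := by
    rcases isOpen_or_isCompact_image_ratio hD (imPart ζ).continuous_of_finiteDimensional
      (rePart ζ).continuous_of_finiteDimensional hre hp hp_im with h | h
    · exact exists_subset_Ioo_of_isOpen_of_one_add_mul_pos h hzero hpos
    · exact exists_subset_Ioo_of_isCompact_of_one_add_mul_pos h ⟨_, hzero⟩ hpos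
  exact mem_coneTube_of_image_ratio_subset_Ioo hD_ne hζ.1 hre hsub hNM

lemma dualCompl_coneTube_subset (hD : IsOpen D ∨ IsCompact D)
    (hconn : ∀ L, isLineR L → IsPreconnected (D ∩ L)) :
    dualCompl (coneTube cplxₛₗ (affineCone D)) ⊆
      coneTube extLDₛₗ (dualCompl (affineCone D)) := by
  intro ζ hζ
  rcases D.eq_empty_or_nonempty with rfl | ⟨x, hx⟩
  · rw [← extLDₛₗ_rePart_add_imPart ζ, ← one_smul ℂ (extLDₛₗ (rePart ζ))] at hζ ⊢
    rw [dualCompl_affineCone_empty]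
    exact add_smul_mem_coneTube (fun _ _ _ h => ⟨h, Set.mem_univ _⟩) (by simp) hζ.1
  have hp := rep_mem_affineCone hx
  have hζp : ζ (cplxₛₗ x.rep) ≠ 0 := hζ.2 _ ⟨cplxₛₗ_ne_zero hp.1, _, _, isConeSegment_self hp, 1, 0,
    by simp, by simp⟩
  have hconj : conj (ζ (cplxₛₗ x.rep)) ≠ 0 := (map_ne_zero _).2 hζp
  rw [← smul_mem_coneTube_iff hconj]
  refine mem_coneTube_of_imPart_eq_zero hD hconn (smul_mem_dualCompl hconj hζ) hp ?_
  simp [imPart, mul_comm]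

end Separation

theorem dualComp_eTube_eq_eTubeD_dualComp_general {n : ℕ} {D : Set (RP n)}
    (hD : IsOpen D ∨ IsCompact D) (hconn : ∀ L, isLineR L → IsPreconnected (D ∩ L)) :
    dualCompC (eTube D) = eTubeD (dualCompR D) := by
  apply affineCone_injective
  calc affineCone (dualCompC (eTube D))
      = dualCompl (affineCone (ellipticTube cplxₛₗ D)) :=
        affineCone_setOf_forall_rep_apply_rep_ne_zero _
    _ = dualCompl (coneTube cplxₛₗ (affineCone D)) := by rw [affineCone_ellipticTube]
    _ = coneTube extLDₛₗ (dualCompl (affineCone D)) :=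
        (dualCompl_coneTube_subset hD hconn).antisymm
          (coneTube_dualCompl_subset extLDₛₗ_apply_cplxₛₗ _)
    _ = coneTube extLDₛₗ (affineCone (dualCompR D)) := by
        rw [← affineCone_setOf_forall_rep_apply_rep_ne_zero]
        rfl
    _ = affineCone (eTubeD (dualCompR D)) := (affineCone_ellipticTube _).symm

/-- If `D ⊆ ℝℙⁿ` is properly convex and open or compact, then
`(D^e)* = (D*)^e`. -/
theorem dualComp_eTube_eq_eTubeD_dualComp
    (n : ℕ) (D : Set (RP n)) (hD : IsOpen D ∨ IsCompact D) (hpc : properlyConvexR D) :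
    dualCompC (eTube D) = eTubeD (dualCompR D) :=
  dualComp_eTube_eq_eTubeD_dualComp_general hD hpc.1.2
end
end
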